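/- For every equivalence class [ĉ] ∈ Rec(G,s)/~_s, the s-level and the d-level of the class coincide: slvl([ĉ]) = dlvl([ĉ]). -/

import Mathlib

open Finset Polynomial

namespace SandpileBM

variable {V E : Type} [Fintype V] [DecidableEq V] [Fintype E] [DecidableEq E]

/-- The number of edges from `v` to `w` in the multigraph given by `src`, `tgt`. -/
def numEdges (src tgt : E → V) (v w : V) : ℕ :=
  (Finset.univ.filter fun e => src e = v ∧ tgt e = w).card

/-- The out-degree of a vertex. -/
def outdeg (src : E → V) (v : V) : ℕ :=
  (Finset.univ.filter fun e => src e = v).card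

/-- The in-degree of a vertex. -/
def indeg (tgt : E → V) (v : V) : ℕ :=
  (Finset.univ.filter fun e => tgt e = v).card

/-- The digraph is strongly connected: any vertex is reachable from any other by
a directed path. -/
def StronglyConnected (src tgt : E → V) : Prop :=
  ∀ v w : V, Relation.ReflTransGen (fun a b => ∃ e : E, src e = a ∧ tgt e = b) v w

/-- Result of firing the vertex `v` on the chip configuration `c` (sinkless model). -/
def fire (src tgt : E → V) (c : V → ℕ) (v : V) : V → ℕ :=
  fun w => c w + numEdges src tgt v w - (if w = v then outdeg src v else 0)

/-- One legal firing move in the sinkless model. -/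
def FireStep (src tgt : E → V) (c d : V → ℕ) : Prop :=
  ∃ v : V, outdeg src v ≤ c v ∧ d = fire src tgt c v

/-- `Reach c d`: `d` is obtained from `c` by a finite sequence of legal firing moves. -/
def Reach (src tgt : E → V) : (V → ℕ) → (V → ℕ) → Prop :=
  Relation.ReflTransGen (FireStep src tgt)

/-- Stability of a chip configuration. -/
def Stable (src : E → V) (c : V → ℕ) : Prop :=
  ∀ v : V, c v < outdeg src v

/-- A chip configuration is recurrent if it is not stable and every configuration
accessible from it can reach it back. -/
def Recurrent (src tgt : E → V) (c : V → ℕ) : Prop :=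
  ¬ Stable src c ∧ ∀ d : V → ℕ, Reach src tgt c d → Reach src tgt d c

/-- Level (total number of chips) of a chip configuration. -/
def lvl (c : V → ℕ) : ℕ := ∑ v : V, c v

/-- Indicator function of the vertex `s`. -/
def deltaS (s : V) : V → ℕ := fun v => if v = s then 1 else 0

/-- Result of firing the vertex `v` on an `s`-configuration. -/
def sfire (src tgt : E → V) (s : V) (c : {v : V // v ≠ s} → ℕ) (v : {v : V // v ≠ s}) :
    {v : V // v ≠ s} → ℕ :=
  fun w => c w + numEdges src tgt v.1 w.1 - (if w = v then outdeg src v.1 else 0)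

/-- One legal s-firing move. -/
def SFireStep (src tgt : E → V) (s : V) (c d : {v : V // v ≠ s} → ℕ) : Prop :=
  ∃ v : {v : V // v ≠ s}, outdeg src v.1 ≤ c v ∧ d = sfire src tgt s c v

/-- `SReach c d`: `d` is obtained from `c` by a finite sequence of legal s-firing moves. -/
def SReach (src tgt : E → V) (s : V) :
    ({v : V // v ≠ s} → ℕ) → ({v : V // v ≠ s} → ℕ) → Prop :=
  Relation.ReflTransGen (SFireStep src tgt s)

/-- Stability of an `s`-configuration. -/
def SStable (src : E → V) (s : V) (c : {v : V // v ≠ s} → ℕ) : Prop :=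
  ∀ v : {v : V // v ≠ s}, c v < outdeg src v.1

/-- The stabilization `c°` of an `s`-configuration: the (for strongly connected digraphs,
unique) stable `s`-configuration reachable from `c` by legal s-firing moves. -/
noncomputable def stab (src tgt : E → V) (s : V) (c : {v : V // v ≠ s} → ℕ) :
    {v : V // v ≠ s} → ℕ :=
  Classical.epsilon fun d => SReach src tgt s c d ∧ SStable src s d

/-- An `s`-configuration `c` is s-recurrent if every `s`-configuration can be completed
to one whose stabilization is `c`. -/
def SRecurrent (src tgt : E → V) (s : V) (c : {v : V // v ≠ s} → ℕ) : Prop :=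
  ∀ c₁ : {v : V // v ≠ s} → ℕ, ∃ c₂ : {v : V // v ≠ s} → ℕ,
    stab src tgt s (c₁ + c₂) = c

/-- `β_s`, recording the number of edges from `s` to each other vertex. -/
def betaS (src tgt : E → V) (s : V) : {v : V // v ≠ s} → ℕ :=
  fun v => numEdges src tgt s v.1

/-- The relation `~_s` on s-recurrent configurations: `d = (c + k·β_s)°` for some `k`. -/
def SEquiv (src tgt : E → V) (s : V) (c d : {v : V // v ≠ s} → ℕ) : Prop :=
  ∃ k : ℕ, stab src tgt s (c + k • betaS src tgt s) = d

/-- Restriction of a chip configuration to `V ∖ {s}`. -/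
def restrictS (s : V) (c : V → ℕ) : {v : V // v ≠ s} → ℕ := fun v => c v.1

/-- Extension `c̄` of an `s`-configuration by `0` at `s`. -/
def extendS (s : V) (c : {v : V // v ≠ s} → ℕ) : V → ℕ :=
  fun v => if h : v = s then 0 else c ⟨v, h⟩

/-- The s-index `χ(c)`: the least `k` such that `c̄ + k·δ_s` is recurrent. -/
noncomputable def sIndex (src tgt : E → V) (s : V) (c : {v : V // v ≠ s} → ℕ) : ℕ :=
  sInf {k : ℕ | Recurrent src tgt (extendS s c + k • deltaS s)}

/-- `φ(c) := c̄ + χ(c)·δ_s`. -/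
noncomputable def phi (src tgt : E → V) (s : V) (c : {v : V // v ≠ s} → ℕ) : V → ℕ :=
  extendS s c + sIndex src tgt s c • deltaS s

/-- The s-level `slvl(c) := χ(c) + Σ_{v ≠ s} c(v)`. -/
noncomputable def slvl (src tgt : E → V) (s : V) (c : {v : V // v ≠ s} → ℕ) : ℕ :=
  sIndex src tgt s c + ∑ v : {v : V // v ≠ s}, c v

/-- The d-level `dlvl(c) := deg⁺(s) + Σ_{v ≠ s} c(v)`. -/
def dlvl (src : E → V) (s : V) (c : {v : V // v ≠ s} → ℕ) : ℕ :=
  outdeg src s + ∑ v : {v : V // v ≠ s}, c v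

/-- The set (as a type) of recurrent chip configurations. -/
abbrev RecL (src tgt : E → V) := {c : V → ℕ // Recurrent src tgt c}

/-- The setoid on recurrent configurations generated by the relation `~` (i.e. `⤳`). -/
def recLSetoid (src tgt : E → V) : Setoid (RecL src tgt) :=
  Relation.EqvGen.setoid fun a b => Reach src tgt a.1 b.1

/-- The set of `~`-classes of recurrent configurations. -/
abbrev RecLQuot (src tgt : E → V) := Quotient (recLSetoid src tgt)

/-- The set (as a type) of s-recurrent configurations. -/
abbrev RecS (src tgt : E → V) (s : V) := {c : {v : V // v ≠ s} → ℕ // SRecurrent src tgt s c}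

/-- The setoid on s-recurrent configurations generated by the relation `~_s`. -/
def recSSetoid (src tgt : E → V) (s : V) : Setoid (RecS src tgt s) :=
  Relation.EqvGen.setoid fun a b => SEquiv src tgt s a.1 b.1

/-- The set of `~_s`-classes of s-recurrent configurations. -/
abbrev RecSQuot (src tgt : E → V) (s : V) := Quotient (recSSetoid src tgt s)

/-- The level of a `~`-class of recurrent configurations (level is constant on classes). -/
noncomputable def lvlClass (src tgt : E → V) (q : RecLQuot src tgt) : ℕ :=
  sSup ((fun c : RecL src tgt => lvl c.1) '' {c | Quotient.mk (recLSetoid src tgt) c = q})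

/-- The s-level of a `~_s`-class (s-level is constant on classes). -/
noncomputable def slvlClass (src tgt : E → V) (s : V) (q : RecSQuot src tgt s) : ℕ :=
  sSup ((fun c : RecS src tgt s => slvl src tgt s c.1) ''
    {c | Quotient.mk (recSSetoid src tgt s) c = q})

/-- The d-level of a `~_s`-class: the maximum d-level over the class. -/
noncomputable def dlvlClass (src tgt : E → V) (s : V) (q : RecSQuot src tgt s) : ℕ :=
  sSup ((fun c : RecS src tgt s => dlvl src s c.1) ''
    {c | Quotient.mk (recSSetoid src tgt s) c = q})

/-- The Biggs–Merino polynomial `B(G,s;y) = Σ_{[c] ∈ Rec(G,s)/~_s} y^{dlvl([c])}`. -/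
noncomputable def BM (src tgt : E → V) (s : V) : Polynomial ℤ :=
  ∑ᶠ q : RecSQuot src tgt s, X ^ dlvlClass src tgt s q

/-- `LegalSeq l c d`: firing the vertices in the list `l` in order is a sequence of
legal firing moves transforming `c` into `d` (sinkless model). -/
def LegalSeq (src tgt : E → V) : List V → (V → ℕ) → (V → ℕ) → Prop
  | [], c, d => d = c
  | v :: l, c, d => outdeg src v ≤ c v ∧ LegalSeq src tgt l (fire src tgt c v) d

/-- `SLegalSeq l c d`: firing the vertices in the list `l` in order is a sequence of
legal s-firing moves transforming `c` into `d`. -/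
def SLegalSeq (src tgt : E → V) (s : V) :
    List {v : V // v ≠ s} → ({v : V // v ≠ s} → ℕ) → ({v : V // v ≠ s} → ℕ) → Prop
  | [], c, d => d = c
  | v :: l, c, d => outdeg src v.1 ≤ c v ∧ SLegalSeq src tgt s l (sfire src tgt s c v) d

/-- The configuration obtained from `c` after firing the vertices of `l` in order. -/
def iterFire (src tgt : E → V) (c : V → ℕ) (l : List V) : V → ℕ :=
  l.foldl (fire src tgt) c

/-- The Laplacian of the digraph applied to an integer vector:
`(Δq)(v) = deg⁺(v)·q(v) − Σ_w A(w,v)·q(w)`. -/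
def lapApply (src tgt : E → V) (q : V → ℤ) : V → ℤ :=
  fun v => (outdeg src v : ℤ) * q v - ∑ w : V, (numEdges src tgt w v : ℤ) * q w

/-- `r` is the primitive period vector of the digraph: it has positive entries with
gcd `1`, lies in the kernel of the Laplacian, and generates this kernel. -/
def IsPeriodVector (src tgt : E → V) (r : V → ℕ) : Prop :=
  (∀ v : V, 0 < r v) ∧ Finset.univ.gcd r = 1 ∧
    lapApply src tgt (fun v => (r v : ℤ)) = 0 ∧
    ∀ q : V → ℤ, lapApply src tgt q = 0 → ∃ k : ℤ, q = k • fun v => (r v : ℤ)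

/-- The Laplacian matrix of the digraph. -/
def lapMatrix (src tgt : E → V) : Matrix V V ℤ :=
  Matrix.of fun v w =>
    if v = w then (outdeg src v : ℤ) - numEdges src tgt v v
    else -(numEdges src tgt w v : ℤ)

/-- The determinant of the reduced Laplacian obtained by deleting the row and
column indexed by `v`. -/
def reducedLapDet (src tgt : E → V) (v : V) : ℤ :=
  (((lapMatrix src tgt).submatrix (fun a : {w : V // w ≠ v} => a.1)
    (fun a : {w : V // w ≠ v} => a.1)).det)

/-- The period constant `α := gcd_{v ∈ V} det Δ_v`. -/
def periodConstant (src tgt : E → V) : ℤ :=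
  Finset.univ.gcd (reducedLapDet src tgt)

/-- `IsWalk l a b`: the list of edges `l` forms a directed walk from `a` to `b`. -/
def IsWalk (src tgt : E → V) : List E → V → V → Prop
  | [], a, b => a = b
  | e :: l, a, b => src e = a ∧ IsWalk src tgt l (tgt e) b

/-- `IsPath l a b`: the list of edges `l` forms a directed path from `a` to `b`:
all visited vertices are distinct (except that the final vertex is allowed to
coincide with the starting vertex). -/
def IsPath (src tgt : E → V) (l : List E) (a b : V) : Prop :=
  IsWalk src tgt l a b ∧ (l.map tgt).Nodup ∧ a ∉ (l.map tgt).dropLast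

/-- `T` is an arborescence rooted at `s`: for every vertex `v` there is a unique
directed path from `s` to `v` using only edges of `T`. -/
def IsArborescence (src tgt : E → V) (s : V) (T : Finset E) : Prop :=
  ∀ v : V, ∃! l : List E, (∀ e ∈ l, e ∈ T) ∧ IsPath src tgt l s v

/-- The edge `e ∉ T` is externally active for the arborescence `T` (w.r.t. the linear
order on `E`): where `P₁`, `P₂` are the two edge-disjoint directed paths in `T ∪ {e}`
sharing their starting vertex and ending at `tgt e`, with `e ∈ P₁`, the smallest edge
on `P₁ ++ P₂` lies on `P₁`. -/
def ExtActive [LinearOrder E] (src tgt : E → V) (T : Finset E) (e : E) : Prop :=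
  e ∉ T ∧ ∃ (u : V) (p₁ p₂ : List E),
    (∀ f ∈ p₁, f ∈ T ∨ f = e) ∧ (∀ f ∈ p₂, f ∈ T ∨ f = e) ∧
    IsPath src tgt p₁ u (tgt e) ∧ IsPath src tgt p₂ u (tgt e) ∧
    e ∈ p₁ ∧ (∀ f ∈ p₁, f ∉ p₂) ∧
    ∃ fmin ∈ p₁, ∀ f ∈ p₁ ++ p₂, fmin ≤ f

/-- The external activity `e(T)` of an arborescence `T`. -/
noncomputable def extActivity [LinearOrder E] (src tgt : E → V) (T : Finset E) : ℕ :=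
  Nat.card {e : E // ExtActive src tgt T e}

/-- The greedoid Tutte polynomial `T(G,s;y) = Σ_{T ∈ A(G,s)} y^{e(T)}`. -/
noncomputable def greedoidTutte [LinearOrder E] (src tgt : E → V) (s : V) : Polynomial ℤ :=
  ∑ᶠ T : {T : Finset E // IsArborescence src tgt s T}, X ^ extActivity src tgt T.1

/-- `f` is a `G^r`-parking function rooted at `s`. -/
def IsParking (src tgt : E → V) (s : V) (f : {v : V // v ≠ s} → ℕ) : Prop :=
  ∀ A : Finset {v : V // v ≠ s}, A.Nonempty →
    ∃ v ∈ A, f v < Nat.card {e : E // (∀ w ∈ A, src e ≠ w.1) ∧ tgt e = v.1}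

/-- The d-level of a `G^r`-parking function: `|E| − |V| + 1 − Σ_{v≠s} f(v)`. -/
noncomputable def parkDlvl (src : E → V) (s : V) (f : {v : V // v ≠ s} → ℕ) : ℕ :=
  ((Fintype.card E : ℤ) - Fintype.card V + 1 - ∑ v : {v : V // v ≠ s}, (f v : ℤ)).toNat

/-- `σ` is an s-decreasing traversal: a sequence in which every vertex and edge of `G`
appears exactly once, satisfying (R1) every vertex other than `s` is immediately
preceded by an edge targeting it, and (R2) every edge is the `<ₑ`-maximum edge not yet
seen whose source has been seen. -/
def IsTraversal [LinearOrder E] (src tgt : E → V) (s : V) (σ : List (V ⊕ E)) : Prop :=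
  σ.Nodup ∧ (∀ x : V ⊕ E, x ∈ σ) ∧
  (∀ (i : ℕ) (hi : i < σ.length) (v : V),
      σ.get ⟨i, hi⟩ = Sum.inl v → v ≠ s →
      0 < i ∧ ∃ e : E, tgt e = v ∧ σ.get ⟨i - 1, by omega⟩ = Sum.inr e) ∧
  (∀ (i : ℕ) (hi : i < σ.length) (e : E),
      σ.get ⟨i, hi⟩ = Sum.inr e →
      Sum.inl (src e) ∈ σ.take i ∧
      ∀ f : E, Sum.inr f ∉ σ.take i → Sum.inl (src f) ∈ σ.take i → f ≤ e)

open scoped Classical in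
/-- `Υ(σ)`: the set of edges immediately preceding a non-sink vertex in `σ`. -/
noncomputable def Upsilon (src tgt : E → V) (s : V) (σ : List (V ⊕ E)) : Finset E :=
  Finset.univ.filter fun e =>
    ∃ (i : ℕ) (hi : i < σ.length) (v : V), v ≠ s ∧ σ.get ⟨i, hi⟩ = Sum.inl v ∧
      0 < i ∧ ∃ hj : i - 1 < σ.length, σ.get ⟨i - 1, hj⟩ = Sum.inr e

/-- The strength of `σ`: the number of strong edges, i.e. edges whose target appears
before them in `σ`. -/
noncomputable def strength (tgt : E → V) (σ : List (V ⊕ E)) : ℕ :=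
  Nat.card {e : E // ∃ (i : ℕ) (hi : i < σ.length),
    σ.get ⟨i, hi⟩ = Sum.inr e ∧ Sum.inl (tgt e) ∈ σ.take i}

/-- `Ψ(σ)(v)`: one less than the number of edges targeting `v` that appear before the
vertex `v` in `σ`. -/
def Psi (tgt : E → V) (s : V) (σ : List (V ⊕ E)) : {v : V // v ≠ s} → ℕ :=
  fun v =>
    (((σ.takeWhile fun x => x ≠ Sum.inl v.1).filterMap Sum.getRight?).filter
      fun e => tgt e = v.1).length - 1

section Helpers

set_option linter.unusedSectionVars false

theorem legalSeq_reach (src tgt : E → V) (l : List V) :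
    ∀ c d, LegalSeq src tgt l c d → Reach src tgt c d := by
  induction l with
  | nil => intro c d h; rw [show d = c from h]; exact Relation.ReflTransGen.refl
  | cons v l ih =>
    intro c d h
    exact Relation.ReflTransGen.head ⟨v, h.1, rfl⟩ (ih _ _ h.2)

theorem reach_legalSeq (src tgt : E → V) {c d : V → ℕ} (h : Reach src tgt c d) :
    ∃ l, LegalSeq src tgt l c d := by
  induction h using Relation.ReflTransGen.head_induction_on with
  | refl => exact ⟨[], rfl⟩
  | head h _ ih =>
    obtain ⟨v, hv, rfl⟩ := h
    obtain ⟨l, hl⟩ := ih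
    exact ⟨v :: l, hv, hl⟩

theorem legalSeq_append (src tgt : E → V) (l₁ : List V) :
    ∀ (l₂ : List V) (c d e : V → ℕ), LegalSeq src tgt l₁ c d → LegalSeq src tgt l₂ d e →
      LegalSeq src tgt (l₁ ++ l₂) c e := by
  induction l₁ with
  | nil => intro l₂ c d e h h'; rw [show d = c from h] at h'; exact h'
  | cons v l ih =>
    intro l₂ c d e h h'
    exact ⟨h.1, ih _ _ _ _ h.2 h'⟩

theorem le_fire (src tgt : E → V) (c : V → ℕ) {u v : V} (h : v ≠ u) :
    fire src tgt c u v = c v + numEdges src tgt u v := by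
  simp [fire, h]

theorem fire_comm (src tgt : E → V) (c : V → ℕ) {u v : V} (h : u ≠ v)
    (hu : outdeg src u ≤ c u) (hv : outdeg src v ≤ c v) :
    fire src tgt (fire src tgt c u) v = fire src tgt (fire src tgt c v) u := by
  funext w
  unfold fire
  by_cases h1 : w = u
  · subst h1; simp [h]; omega
  · by_cases h2 : w = v
    · subst h2; simp [h1]; omega
    · simp [h1, h2]; omega

theorem legalSeq_front (src tgt : E → V) (v : V) (l₂ : List V) (l₁ : List V) :
    ∀ (c d : V → ℕ), v ∉ l₁ → outdeg src v ≤ c v → LegalSeq src tgt (l₁ ++ v :: l₂) c d →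
      LegalSeq src tgt (l₁ ++ l₂) (fire src tgt c v) d := by
  induction l₁ with
  | nil => intro c d _ _ h; exact h.2
  | cons u l ih =>
    intro c d hv hc h
    simp only [List.mem_cons, not_or] at hv
    have h1 := ih (fire src tgt c u) d hv.2 (by rw [le_fire _ _ _ hv.1]; omega) h.2
    refine ⟨?_, ?_⟩
    · rw [le_fire _ _ _ (Ne.symm hv.1)]; have := h.1; omega
    · rw [← fire_comm src tgt c (Ne.symm hv.1) h.1 hc]; exact h1

theorem legalSeq_le (src tgt : E → V) (v : V) (l : List V) :
    ∀ (c d : V → ℕ), v ∉ l → LegalSeq src tgt l c d → c v ≤ d v := by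
  induction l with
  | nil => intro c d _ h; rw [show d = c from h]
  | cons u l ih =>
    intro c d hv h
    simp only [List.mem_cons, not_or] at hv
    have := ih _ _ hv.2 h.2
    rw [le_fire _ _ _ hv.1] at this
    omega

theorem numEdges_pos (src tgt : E → V) (e : E) : 0 < numEdges src tgt (src e) (tgt e) :=
  Finset.card_pos.2 ⟨e, by simp⟩

theorem legalSeq_lt (src tgt : E → V) (e : E) (l : List V) :
    ∀ (c d : V → ℕ), tgt e ∉ l → src e ∈ l → LegalSeq src tgt l c d → c (tgt e) < d (tgt e) := by
  induction l with
  | nil => intro c d _ h; simp at h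
  | cons u l ih =>
    intro c d hv hm h
    simp only [List.mem_cons, not_or] at hv
    have h0 := le_fire src tgt c hv.1
    rcases List.mem_cons.1 hm with h1 | h1
    · have h2 := legalSeq_le src tgt _ l _ _ hv.2 h.2
      have := numEdges_pos src tgt e
      rw [h1] at this
      omega
    · have := ih _ _ hv.2 h1 h.2
      omega

theorem cycle_mem (src tgt : E → V) (hG : StronglyConnected src tgt) {l : List V} {c : V → ℕ}
    (hl : l ≠ []) (h : LegalSeq src tgt l c c) (w : V) : w ∈ l := by
  obtain ⟨u, hu⟩ := List.exists_mem_of_ne_nil l hl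
  induction hG u w with
  | refl => exact hu
  | tail _ he ih =>
    obtain ⟨e, rfl, rfl⟩ := he
    by_contra hn
    exact lt_irrefl _ (legalSeq_lt src tgt e l c c hn ih h)

theorem cycle_step (src tgt : E → V) (hG : StronglyConnected src tgt) {l : List V} {c d : V → ℕ}
    (hl : l ≠ []) (h : LegalSeq src tgt l c c) (hs : FireStep src tgt c d) :
    Reach src tgt d c ∧ ∃ l', l' ≠ [] ∧ LegalSeq src tgt l' d d := by
  obtain ⟨v, hv, rfl⟩ := hs
  obtain ⟨l₁, l₂, rfl, hn⟩ := List.eq_append_cons_of_mem (cycle_mem src tgt hG hl h v)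
  have h1 := legalSeq_front src tgt v l₂ l₁ c c hn hv h
  refine ⟨legalSeq_reach _ _ _ _ _ h1, (l₁ ++ l₂) ++ [v], by simp, ?_⟩
  exact legalSeq_append _ _ _ _ _ _ _ h1 ⟨hv, rfl⟩

theorem recurrent_of_cycle (src tgt : E → V) (hG : StronglyConnected src tgt) {c x : V → ℕ}
    (h : FireStep src tgt c x) (h' : Reach src tgt x c) : Recurrent src tgt c := by
  refine ⟨?_, ?_⟩
  · obtain ⟨v, hv, _⟩ := h
    exact fun hs => absurd (hs v) (by omega)
  · intro d hd
    have key : Reach src tgt d c ∧ ∃ l', l' ≠ [] ∧ LegalSeq src tgt l' d d := by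
      induction hd with
      | refl =>
        obtain ⟨v, hv, rfl⟩ := h
        obtain ⟨l, hl⟩ := reach_legalSeq src tgt h'
        exact ⟨Relation.ReflTransGen.refl, v :: l, by simp, hv, hl⟩
      | tail _ hs ih =>
        obtain ⟨h1, l, hl, h2⟩ := ih
        obtain ⟨h3, h4⟩ := cycle_step src tgt hG hl h2 hs
        exact ⟨h3.trans h1, h4⟩
    exact key.1

/-! ### stabilization -/

theorem sfire_of_ne (src tgt : E → V) (s : V) (c : {v : V // v ≠ s} → ℕ) {u v : {v : V // v ≠ s}}
    (h : v ≠ u) : sfire src tgt s c u v = c v + numEdges src tgt u.1 v.1 := by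
  simp [sfire, h]

theorem sfire_comm (src tgt : E → V) (s : V) (c : {v : V // v ≠ s} → ℕ) {u v : {v : V // v ≠ s}}
    (h : u ≠ v) (hu : outdeg src u.1 ≤ c u) (hv : outdeg src v.1 ≤ c v) :
    sfire src tgt s (sfire src tgt s c u) v = sfire src tgt s (sfire src tgt s c v) u := by
  funext w
  unfold sfire
  by_cases h1 : w = u
  · subst h1; simp [h]; omega
  · by_cases h2 : w = v
    · subst h2; simp [h1]; omega
    · simp [h1, h2]; omega

theorem sstable_reach (src tgt : E → V) (s : V) {c d : {v : V // v ≠ s} → ℕ}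
    (hc : SStable src s c) (h : SReach src tgt s c d) : c = d := by
  induction h using Relation.ReflTransGen.head_induction_on with
  | refl => rfl
  | head h _ _ =>
    obtain ⟨v, hv, _⟩ := h
    exact absurd (hc v) (by omega)

theorem sstab_unique (src tgt : E → V) (s : V) {c d e : {v : V // v ≠ s} → ℕ}
    (hd : SReach src tgt s c d) (he : SReach src tgt s c e)
    (sd : SStable src s d) (se : SStable src s e) : d = e := by
  have := Relation.church_rosser (r := SFireStep src tgt s) (a := c) (b := d) (c := e) (by
    rintro a b c ⟨u, hu, rfl⟩ ⟨v, hv, rfl⟩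
    by_cases huv : u = v
    · subst huv
      exact ⟨_, Relation.ReflGen.refl, Relation.ReflTransGen.refl⟩
    · refine ⟨sfire src tgt s (sfire src tgt s a u) v, Relation.ReflGen.single ⟨v, ?_, rfl⟩,
        Relation.ReflTransGen.single ⟨u, ?_, sfire_comm _ _ _ _ huv hu hv⟩⟩
      · rw [sfire_of_ne _ _ _ _ (Ne.symm huv)]; omega
      · rw [sfire_of_ne _ _ _ _ huv]; omega) hd he
  obtain ⟨f, h1, h2⟩ := this
  rw [sstable_reach _ _ _ sd h1, sstable_reach _ _ _ se h2]

theorem exists_rank (src tgt : E → V) (hG : StronglyConnected src tgt) (s : V) :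
    ∃ d : V → ℕ, ∀ v, v ≠ s → ∃ e, src e = v ∧ d (tgt e) < d v := by
  have hex : ∀ v, ∃ n, ∃ l : List E, l.length = n ∧ IsWalk src tgt l v s := by
    intro v
    have : ∃ l : List E, IsWalk src tgt l v s := by
      induction hG v s using Relation.ReflTransGen.head_induction_on with
      | refl => exact ⟨[], rfl⟩
      | head he _ ih =>
        obtain ⟨e, h1, rfl⟩ := he
        obtain ⟨l, hl⟩ := ih
        exact ⟨e :: l, h1, hl⟩
    obtain ⟨l, hl⟩ := this
    exact ⟨_, l, rfl, hl⟩
  classical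
  refine ⟨fun v => Nat.find (hex v), fun v hv => ?_⟩
  obtain ⟨l, hl, hw⟩ := Nat.find_spec (hex v)
  cases l with
  | nil => exact absurd hw hv
  | cons e l =>
    refine ⟨e, hw.1, ?_⟩
    have : Nat.find (hex (tgt e)) ≤ l.length := Nat.find_min' _ ⟨l, rfl, hw.2⟩
    simp only [List.length_cons] at hl
    show Nat.find (hex (tgt e)) < Nat.find (hex v)
    omega

theorem sum_numEdges (src tgt : E → V) (v : V) (f : V → ℤ) :
    ∑ w, (numEdges src tgt v w : ℤ) * f w = ∑ e ∈ Finset.univ.filter (fun e => src e = v), f (tgt e) := by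
  rw [← Finset.sum_fiberwise (Finset.univ.filter (fun e => src e = v)) tgt]
  refine Finset.sum_congr rfl fun w _ => ?_
  rw [Finset.sum_congr rfl (g := fun _ => f w) (by
    intro e he; rw [(Finset.mem_filter.1 he).2])]
  simp [numEdges, Finset.filter_filter]

/-- A strictly superharmonic weight vanishing at `s`. -/
theorem exists_weight (src tgt : E → V) (hG : StronglyConnected src tgt) (s : V) :
    ∃ w : V → ℤ, (∀ v, 0 ≤ w v) ∧ w s = 0 ∧
      ∀ v, v ≠ s → ∑ u, (numEdges src tgt v u : ℤ) * w u < outdeg src v * w v := by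
  obtain ⟨d, hd⟩ := exists_rank src tgt hG s
  obtain ⟨n, hn⟩ : ∃ n, ∀ v, d v ≤ n :=
    ⟨Finset.univ.sup d, fun v => Finset.le_sup (Finset.mem_univ v)⟩
  set B : ℤ := (Fintype.card E : ℤ) + 1 with hB
  have hB1 : 1 ≤ B := by rw [hB]; linarith [Int.natCast_nonneg (Fintype.card E)]
  have hup : ∀ v, B ^ (n - d v) ≤ B ^ n := fun v => pow_le_pow_right₀ hB1 (Nat.sub_le _ _)
  refine ⟨fun v => if v = s then 0 else B ^ n - B ^ (n - d v), ?_, by simp, ?_⟩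
  · intro v
    dsimp only
    split_ifs
    · exact le_rfl
    · linarith [hup v]
  · intro v hv
    rw [sum_numEdges]
    obtain ⟨e₀, he₀, hlt⟩ := hd v hv
    set F := Finset.univ.filter (fun e => src e = v) with hF
    have hcard : (F.card : ℤ) < B := by
      have : F.card ≤ Fintype.card E := Finset.card_le_univ _
      rw [hB]; omega
    have hout : (outdeg src v : ℤ) = F.card := rfl
    rw [hout]
    have hle : ∀ u, (if u = s then 0 else B ^ n - B ^ (n - d u)) ≤ B ^ n - B ^ (n - d u) := by
      intro u
      split_ifs
      · linarith [hup u]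
      · exact le_rfl
    refine lt_of_le_of_lt (Finset.sum_le_sum fun e _ => hle (tgt e)) ?_
    simp only [hv, if_false]
    rw [Finset.sum_sub_distrib]
    simp only [Finset.sum_const, nsmul_eq_mul]
    have h1 : B ^ (n - d (tgt e₀)) ≤ ∑ e ∈ F, B ^ (n - d (tgt e)) :=
      Finset.single_le_sum (f := fun e => B ^ (n - d (tgt e)))
        (fun e _ => by positivity) (by simp [hF, he₀])
    have h2 : B ^ (n - d v) * B ≤ B ^ (n - d (tgt e₀)) := by
      rw [← pow_succ]
      exact pow_le_pow_right₀ hB1 (by have := hn v; omega)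
    have h3 : 0 < B ^ (n - d v) := by positivity
    nlinarith

theorem sstab_exists (src tgt : E → V) (hG : StronglyConnected src tgt) (s : V)
    (c : {v : V // v ≠ s} → ℕ) : ∃ d, SReach src tgt s c d ∧ SStable src s d := by
  obtain ⟨w, hw0, hws, hw⟩ := exists_weight src tgt hG s
  obtain ⟨N, hN⟩ : ∃ N : ℕ, ∑ v : {v : V // v ≠ s}, (c v : ℤ) * w v.1 < N :=
    ⟨(∑ v : {v : V // v ≠ s}, (c v : ℤ) * w v.1).toNat + 1, by omega⟩
  induction N generalizing c with
  | zero =>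
    exfalso
    have : 0 ≤ ∑ v : {v : V // v ≠ s}, (c v : ℤ) * w v.1 :=
      Finset.sum_nonneg fun v _ => mul_nonneg (by positivity) (hw0 _)
    rw [Nat.cast_zero] at hN
    exact absurd hN (not_lt.2 this)
  | succ N ih =>
    by_cases hs : SStable src s c
    · exact ⟨c, Relation.ReflTransGen.refl, hs⟩
    · unfold SStable at hs
      push Not at hs
      obtain ⟨v, hv⟩ := hs
      obtain ⟨d, h1, h2⟩ := ih (sfire src tgt s c v) (by
        have hh : ∑ u : {v : V // v ≠ s}, (sfire src tgt s c v u : ℤ) * w u.1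
            = ∑ u : {v : V // v ≠ s}, (c u : ℤ) * w u.1
              + ∑ u : {v : V // v ≠ s}, (numEdges src tgt v.1 u.1 : ℤ) * w u.1
              - outdeg src v.1 * w v.1 := by
          have : ∀ u : {v : V // v ≠ s}, (sfire src tgt s c v u : ℤ) * w u.1
            = (c u : ℤ) * w u.1 + (numEdges src tgt v.1 u.1 : ℤ) * w u.1
              - (if u = v then outdeg src v.1 * w v.1 else 0) := by
            intro u
            by_cases huv : u = v
            · subst huv
              simp only [sfire, if_true]
              rw [Nat.cast_sub (by omega)]
              push_cast; ring
            · simp only [sfire, huv, if_false, Nat.sub_zero]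
              push_cast; ring
          simp only [this, Finset.sum_sub_distrib, Finset.sum_add_distrib]
          simp
        have h3 := hw v.1 v.2
        rw [Fintype.sum_eq_add_sum_subtype_ne _ s, hws] at h3
        push_cast at hN
        simp only [mul_zero, zero_add] at h3
        linarith)
      exact ⟨d, Relation.ReflTransGen.head ⟨v, hv, rfl⟩ h1, h2⟩

theorem stab_spec (src tgt : E → V) (hG : StronglyConnected src tgt) (s : V)
    (c : {v : V // v ≠ s} → ℕ) :
    SReach src tgt s c (stab src tgt s c) ∧ SStable src s (stab src tgt s c) :=
  Classical.epsilon_spec (sstab_exists src tgt hG s c)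

theorem stab_eq (src tgt : E → V) (hG : StronglyConnected src tgt) (s : V)
    {c d : {v : V // v ≠ s} → ℕ} (h : SReach src tgt s c d) (hd : SStable src s d) :
    stab src tgt s c = d :=
  sstab_unique src tgt s (stab_spec src tgt hG s c).1 h (stab_spec src tgt hG s c).2 hd

theorem sreach_add (src tgt : E → V) (s : V) {c d : {v : V // v ≠ s} → ℕ} (b : {v : V // v ≠ s} → ℕ)
    (h : SReach src tgt s c d) : SReach src tgt s (c + b) (d + b) := by
  refine Relation.ReflTransGen.lift (p := SFireStep src tgt s) (fun x => x + b) ?_ _ _ h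
  rintro x y ⟨v, hv, rfl⟩
  refine ⟨v, by simp only [Pi.add_apply]; omega, ?_⟩
  funext w
  simp only [sfire, Pi.add_apply]
  split_ifs with hw
  · subst hw; omega
  · omega

theorem stab_add (src tgt : E → V) (hG : StronglyConnected src tgt) (s : V)
    (a b : {v : V // v ≠ s} → ℕ) :
    stab src tgt s (stab src tgt s a + b) = stab src tgt s (a + b) := by
  symm
  have h := stab_spec src tgt hG s (stab src tgt s a + b)
  exact stab_eq src tgt hG s ((sreach_add src tgt s b (stab_spec src tgt hG s a).1).trans h.1) h.2

theorem srec_stable (src tgt : E → V) (hG : StronglyConnected src tgt) (s : V)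
    {c : {v : V // v ≠ s} → ℕ} (h : SRecurrent src tgt s c) : SStable src s c := by
  obtain ⟨c₂, rfl⟩ := h 0
  exact (stab_spec src tgt hG s _).2

theorem srec_add (src tgt : E → V) (hG : StronglyConnected src tgt) (s : V)
    {c : {v : V // v ≠ s} → ℕ} (h : SRecurrent src tgt s c) (b : {v : V // v ≠ s} → ℕ) :
    SRecurrent src tgt s (stab src tgt s (c + b)) := by
  intro c₁
  obtain ⟨c₂, rfl⟩ := h c₁
  exact ⟨c₂ + b, by rw [stab_add src tgt hG, add_assoc]⟩

theorem finite_sstable (src : E → V) (s : V) : {c | SStable src s c}.Finite := by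
  refine (Set.finite_Iic (fun v : {v : V // v ≠ s} => outdeg src v.1)).subset ?_
  intro c hc v
  exact (hc v).le

theorem srec_periodic (src tgt : E → V) (hG : StronglyConnected src tgt) (s : V)
    {c : {v : V // v ≠ s} → ℕ} (h : SRecurrent src tgt s c) (b : {v : V // v ≠ s} → ℕ) :
    ∃ N : ℕ, 0 < N ∧ stab src tgt s (c + N • b) = c := by
  obtain ⟨i, _, j, _, hij, he⟩ := Set.infinite_univ.exists_lt_map_eq_of_mapsTo
    (f := fun m : ℕ => stab src tgt s (m • b)) (t := {c | SStable src s c})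
    (fun m _ => (stab_spec src tgt hG s _).2) (finite_sstable src s)
  obtain ⟨c₂, hc⟩ := h (i • b)
  refine ⟨j - i, by omega, ?_⟩
  calc stab src tgt s (c + (j - i) • b)
      = stab src tgt s (i • b + c₂ + (j - i) • b) := by rw [← hc, stab_add src tgt hG]
    _ = stab src tgt s (j • b + c₂) := by
        congr 1
        rw [add_right_comm, ← add_nsmul]
        congr 2
        congr 1
        omega
    _ = stab src tgt s (stab src tgt s (j • b) + c₂) := by rw [stab_add src tgt hG]
    _ = stab src tgt s (stab src tgt s (i • b) + c₂) := by rw [he]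
    _ = c := by rw [stab_add src tgt hG, hc]

/-! ### lifting to the sinkless game -/

theorem sum_numEdges_one (src tgt : E → V) (v : V) :
    ∑ w, numEdges src tgt v w = outdeg src v := by
  have := sum_numEdges src tgt v (fun _ => 1)
  simp only [mul_one, Finset.sum_const, nsmul_eq_mul] at this
  exact_mod_cast this

theorem lvl_step (src tgt : E → V) {c d : V → ℕ} (h : FireStep src tgt c d) : lvl d = lvl c := by
  obtain ⟨v, hv, rfl⟩ := h
  have key : ∀ w, fire src tgt c v w + (if w = v then outdeg src v else 0)
      = c w + numEdges src tgt v w := by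
    intro w
    simp only [fire]
    split_ifs with hw
    · subst hw; omega
    · omega
  have h2 := Finset.sum_congr (rfl : (Finset.univ : Finset V) = _) (fun w _ => key w)
  simp only [Finset.sum_add_distrib, sum_numEdges_one] at h2
  simp at h2
  exact h2

theorem lvl_reach (src tgt : E → V) {c d : V → ℕ} (h : Reach src tgt c d) : lvl d = lvl c := by
  induction h with
  | refl => rfl
  | tail _ hs ih => rw [lvl_step src tgt hs, ih]

theorem lvl_split (s : V) (c : V → ℕ) : lvl c = c s + ∑ v : {v : V // v ≠ s}, c v.1 :=
  Fintype.sum_eq_add_sum_subtype_ne _ s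

theorem lift_sreach (src tgt : E → V) (s : V) {a b : {v : V // v ≠ s} → ℕ}
    (h : SReach src tgt s a b) : ∀ c : V → ℕ, restrictS s c = a →
      ∃ d, Reach src tgt c d ∧ restrictS s d = b := by
  induction h using Relation.ReflTransGen.head_induction_on with
  | refl => exact fun c hc => ⟨c, Relation.ReflTransGen.refl, hc⟩
  | head h _ ih =>
    obtain ⟨v, hv, rfl⟩ := h
    rintro c rfl
    obtain ⟨d, h1, h2⟩ := ih (fire src tgt c v.1) (by
      funext w
      simp [restrictS, fire, sfire, Subtype.ext_iff])
    exact ⟨d, Relation.ReflTransGen.head ⟨v.1, hv, rfl⟩ h1, h2⟩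

/-- The configuration with restriction `c` and total number of chips `T`. -/
def confT (s : V) (c : {v : V // v ≠ s} → ℕ) (T : ℕ) : V → ℕ :=
  extendS s c + (T - ∑ v, c v) • deltaS s

theorem ext_self (s : V) (c : {v : V // v ≠ s} → ℕ) (k : ℕ) :
    (extendS s c + k • deltaS s) s = k := by
  simp [extendS, deltaS]

theorem ext_ne (s : V) (c : {v : V // v ≠ s} → ℕ) (k : ℕ) (v : {v : V // v ≠ s}) :
    (extendS s c + k • deltaS s) v.1 = c v := by
  simp [extendS, deltaS, v.2]

theorem eq_confT (s : V) {c : {v : V // v ≠ s} → ℕ} {T : ℕ} {y : V → ℕ}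
    (h : restrictS s y = c) (hT : lvl y = T) : y = confT s c T := by
  subst h
  funext v
  by_cases hv : v = s
  · subst hv
    unfold confT
    rw [ext_self, ← hT, lvl_split v y]
    simp [restrictS]
  · exact (ext_ne s (restrictS s y) (T - ∑ v, restrictS s y v) ⟨v, hv⟩).symm

theorem lvl_confT (s : V) (c : {v : V // v ≠ s} → ℕ) {T : ℕ} (h : ∑ v, c v ≤ T) :
    lvl (confT s c T) = T := by
  unfold confT
  rw [lvl_split s, ext_self]
  simp only [ext_ne]
  omega

theorem confT_step (src tgt : E → V) (hG : StronglyConnected src tgt) (s : V)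
    (c : {v : V // v ≠ s} → ℕ) (T : ℕ) (h : outdeg src s + ∑ v, c v ≤ T) :
    ∃ x, FireStep src tgt (confT s c T) x ∧
      Reach src tgt x (confT s (stab src tgt s (c + betaS src tgt s)) T) := by
  have hs : FireStep src tgt (confT s c T) (fire src tgt (confT s c T) s) :=
    ⟨s, by unfold confT; rw [ext_self]; omega, rfl⟩
  refine ⟨_, hs, ?_⟩
  obtain ⟨d, h1, h2⟩ := lift_sreach src tgt s (stab_spec src tgt hG s (c + betaS src tgt s)).1
    (fire src tgt (confT s c T) s) (by
      funext v
      show fire src tgt (confT s c T) s v.1 = _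
      rw [le_fire _ _ _ v.2]
      unfold confT
      rw [ext_ne]
      rfl)
  rw [← eq_confT s h2 (T := T)]
  · exact h1
  · rw [lvl_reach src tgt h1, lvl_step src tgt hs, lvl_confT s c (by omega)]

theorem confT_recurrent (src tgt : E → V) (hG : StronglyConnected src tgt) (s : V)
    {c : {v : V // v ≠ s} → ℕ} (hc : SRecurrent src tgt s c) (T : ℕ)
    (h : ∀ i : ℕ, outdeg src s + ∑ v, stab src tgt s (c + i • betaS src tgt s) v ≤ T) :
    Recurrent src tgt (confT s c T) := by
  have h0 : stab src tgt s (c + 0 • betaS src tgt s) = c := by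
    refine stab_eq src tgt hG s ?_ (srec_stable src tgt hG s hc)
    simp only [zero_smul, add_zero]
    exact Relation.ReflTransGen.refl
  obtain ⟨N, hN, hp⟩ := srec_periodic src tgt hG s hc (betaS src tgt s)
  have step : ∀ i : ℕ, ∃ x,
      FireStep src tgt (confT s (stab src tgt s (c + i • betaS src tgt s)) T) x ∧
      Reach src tgt x (confT s (stab src tgt s (c + (i + 1) • betaS src tgt s)) T) := by
    intro i
    have := confT_step src tgt hG s _ T (h i)
    rwa [stab_add src tgt hG, add_assoc, ← succ_nsmul] at this
  obtain ⟨x, hx, hx'⟩ := step 0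
  rw [h0] at hx
  have all : ∀ n : ℕ,
      Reach src tgt x (confT s (stab src tgt s (c + (n + 1) • betaS src tgt s)) T) := by
    intro n
    induction n with
    | zero => exact hx'
    | succ n ih =>
      obtain ⟨y, hy, hy'⟩ := step (n + 1)
      exact (ih.tail hy).trans hy'
  have := all (N - 1)
  rw [Nat.sub_add_cancel hN, hp] at this
  exact recurrent_of_cycle src tgt hG hx this

theorem sum_le_of_stable (src : E → V) (s : V) {c : {v : V // v ≠ s} → ℕ} (h : SStable src s c) :
    ∑ v, c v ≤ ∑ v : {v : V // v ≠ s}, outdeg src v.1 :=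
  Finset.sum_le_sum fun v _ => (h v).le

theorem dlvl_le_slvl (src tgt : E → V) (hG : StronglyConnected src tgt) (s : V)
    {c : {v : V // v ≠ s} → ℕ} (hc : SRecurrent src tgt s c) :
    dlvl src s c ≤ slvl src tgt s c := by
  have hne : {k : ℕ | Recurrent src tgt (extendS s c + k • deltaS s)}.Nonempty :=
    ⟨_, confT_recurrent src tgt hG s hc
      (outdeg src s + ∑ v : {v : V // v ≠ s}, outdeg src v.1)
      (fun i => Nat.add_le_add_left
        (sum_le_of_stable src s (stab_spec src tgt hG s _).2) _)⟩
  have hm : Recurrent src tgt (extendS s c + sIndex src tgt s c • deltaS s) := Nat.sInf_mem hne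
  have h1 := hm.1
  unfold Stable at h1
  push Not at h1
  obtain ⟨v, hv⟩ := h1
  unfold dlvl slvl
  by_cases hvs : v = s
  · subst hvs
    rw [ext_self] at hv
    omega
  · rw [ext_ne s c _ ⟨v, hvs⟩] at hv
    exact absurd (srec_stable src tgt hG s hc ⟨v, hvs⟩) (by simpa using hv)

theorem slvl_le (src tgt : E → V) (hG : StronglyConnected src tgt) (s : V)
    {c : {v : V // v ≠ s} → ℕ} (hc : SRecurrent src tgt s c) (T : ℕ)
    (h : ∀ i : ℕ, dlvl src s (stab src tgt s (c + i • betaS src tgt s)) ≤ T)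
    (h' : dlvl src s c ≤ T) : slvl src tgt s c ≤ T := by
  have := Nat.sInf_le (s := {k : ℕ | Recurrent src tgt (extendS s c + k • deltaS s)})
    (confT_recurrent src tgt hG s hc T h)
  unfold dlvl at h'
  unfold slvl sIndex
  omega

end Helpers

/-- For every `~_s`-class of s-recurrent configurations the s-level and
the d-level coincide. -/
theorem slvlClass_eq_dlvlClass [Nonempty V] (src tgt : E → V)
    (hG : StronglyConnected src tgt) (s : V) (q : RecSQuot src tgt s) :
    slvlClass src tgt s q = dlvlClass src tgt s q := by
  have hbd : BddAbove ((fun c : RecS src tgt s => dlvl src s c.1) ''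
      {c | Quotient.mk (recSSetoid src tgt s) c = q}) := by
    refine ⟨outdeg src s + ∑ v : {v : V // v ≠ s}, outdeg src v.1, ?_⟩
    rintro _ ⟨c, _, rfl⟩
    exact Nat.add_le_add_left (sum_le_of_stable src s (srec_stable src tgt hG s c.2)) _
  have hle : ∀ c : RecS src tgt s, Quotient.mk (recSSetoid src tgt s) c = q →
      slvl src tgt s c.1 ≤ dlvlClass src tgt s q := by
    intro c hc
    refine slvl_le src tgt hG s c.2 _ (fun i => ?_) (le_csSup hbd ⟨c, hc, rfl⟩)
    refine le_csSup hbd ⟨⟨_, srec_add src tgt hG s c.2 _⟩, ?_, rfl⟩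
    show _ = q
    rw [← hc]
    exact Quotient.sound (s := recSSetoid src tgt s)
      (Relation.EqvGen.symm _ _ (Relation.EqvGen.rel _ _ ⟨i, rfl⟩))
  obtain ⟨c₀, hc₀⟩ := Quotient.exists_rep q
  apply le_antisymm
  · refine csSup_le ⟨_, c₀, hc₀, rfl⟩ ?_
    rintro _ ⟨c, hc, rfl⟩
    exact hle c hc
  · refine csSup_le ⟨_, c₀, hc₀, rfl⟩ ?_
    rintro _ ⟨c, hc, rfl⟩
    refine (dlvl_le_slvl src tgt hG s c.2).trans (le_csSup ⟨dlvlClass src tgt s q, ?_⟩ ⟨c, hc, rfl⟩)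
    rintro _ ⟨c, hc, rfl⟩
    exact hle c hc

end SandpileBM
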